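/- Write m = p₁^{r₁} ⋯ p_s^{r_s} with distinct primes p_i and r_i ≥ 1. Let C ⊆ G be a subgroup with C ≠ G and |C| = p_i^{j} for some i ∈ {1,…,s} and 1 ≤ j ≤ r_i, and let k[i] be the natural number with n = (p_i − 1)·p_i^{r_i − 1}·k[i]. Then |ℳ(C)| = (p_i^{k[i]} − 1)·p_i^{r_i}/m if j = r_i, and |ℳ(C)| = ( p_i^{k[i]·p_i^{r_i − j} + j} − p_i^{k[i]·p_i^{r_i − j − 1} + j} )/m if j ≤ r_i − 1; in particular these fractions are integers. -/

import Mathlib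

/-- The subgroup `K` of `Γ` is conjugate to the subgroup `H`. -/
def SubConj (Γ : Type*) [Group Γ] (H K : Subgroup Γ) : Prop :=
  ∃ γ : Γ, K = Subgroup.map (MulAut.conj γ).toMonoidHom H

/-- A subgroup `M` of `Γ` is a maximal finite subgroup: it is finite, and every finite
subgroup of `Γ` containing it equals it. -/
def IsMaxFin (Γ : Type*) [Group Γ] (M : Subgroup Γ) : Prop :=
  (M : Set Γ).Finite ∧ ∀ K : Subgroup Γ, (K : Set Γ).Finite → M ≤ K → M = K

/-- The set `𝒞(C)` of `Γ`-conjugacy classes of subgroups `H ⊆ Γ` with `π(H) = C`,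
where `π : Γ → Γ/L` is the quotient map. -/
def ConjClassesOver (Γ : Type*) [Group Γ] (L : Subgroup Γ) [L.Normal]
    (C : Subgroup (Γ ⧸ L)) : Type _ :=
  Quot fun H K : {H : Subgroup Γ // Subgroup.map (QuotientGroup.mk' L) H = C} =>
    SubConj Γ H.1 K.1

/-- The set `ℳ(C) ⊆ 𝒞(C)` of `Γ`-conjugacy classes of maximal finite subgroups `M ⊆ Γ`
with `π(M) = C`. -/
def MaxFinClassesOver (Γ : Type*) [Group Γ] (L : Subgroup Γ) [L.Normal]
    (C : Subgroup (Γ ⧸ L)) : Type _ :=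
  Quot fun H K : {H : Subgroup Γ //
      Subgroup.map (QuotientGroup.mk' L) H = C ∧ IsMaxFin Γ H} =>
    SubConj Γ H.1 K.1

/-!
A finite subgroup `H` over `C = ⟨c⟩ ≠ 1` meets `L` trivially, hence is cyclic, generated by its
element over `c`. So one counts `L`-conjugacy classes of elements `h` over `c`, on which `G = Γ/L`
acts by conjugation. The centralizer of `h` is finite, contains every finite subgroup through `h`,
and maps isomorphically onto the stabilizer of the class of `h`; hence `⟨h⟩` is maximal finite
exactly when that stabilizer is `C`, and `|ℳ(C)| · [G : C]` is the number of classes over `c` with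
stabilizer `C`.

The number of classes over `c` is `|det(1 - c)|`. As `Φ_N(c) = 0` on `L` for `N` the order of `c`,
the product of `1 - c ^ k` over the residues `k` prime to `N` is `Φ_N(1)`, while all these factors
have the same determinant up to sign; thus `|det(1 - c)| ^ φ(N) = Φ_N(1) ^ n`, where `Φ_N(1)` is `p`
if `N` is a power of a prime `p` and `1` otherwise.

A class over `d ^ e ≠ 1` is fixed by `d` if and only if it is the `e`-th power of a class over `d`,
which is then unique. If `c = g ^ a` with `g` a generator of `G`, the classes with stabilizer larger
than `C` are those fixed by `g ^ (a / l)` for some prime `l ∣ a`. Since `|C|` is a power of `p`, for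
`l ≠ p` there is only one such class, fixed by all of `G`; so a single prime `l`, namely `p` if it
divides `a`, accounts for all of them.
-/

/-! ### Cyclotomic endomorphisms -/

section Cyclotomic
open Polynomial

lemma cyclotomic_dvd_prod_one_sub_X_pow_sub_C {n : ℕ} (hn : 0 < n) :
    cyclotomic n ℤ ∣
      ∏ k ∈ Finset.range n with n.Coprime k, (1 - X ^ k) - C ((cyclotomic n ℤ).eval 1) := by
  have hζ := Complex.isPrimitiveRoot_exp n hn.ne'
  set ζ := Complex.exp (2 * Real.pi * Complex.I / n)
  have eval_one : (((cyclotomic n ℤ).eval 1 : ℤ) : ℂ) = ∏ ξ ∈ primitiveRoots n ℂ, (1 - ξ) := by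
    have h := eval_one_map (Int.castRingHom ℂ) (cyclotomic n ℤ)
    rw [map_cyclotomic_int, cyclotomic_eq_prod_X_sub_primitiveRoots hζ, eval_prod] at h
    simpa only [eval_sub, eval_X, eval_C, eq_intCast] using h.symm
  have prod_pow : ∏ k ∈ Finset.range n with n.Coprime k, (1 - ζ ^ k) =
      ∏ ξ ∈ primitiveRoots n ℂ, (1 - ξ) := by
    refine Finset.prod_bij (fun k _ ↦ ζ ^ k) (fun k hk ↦ ?_) (fun k hk l hl ↦ ?_)
      (fun ξ hξ ↦ ?_) fun _ _ ↦ rfl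
    · rw [mem_primitiveRoots hn]
      exact hζ.pow_of_coprime k (Finset.mem_filter.1 hk).2.symm
    · simp only [Finset.mem_filter, Finset.mem_range] at hk hl
      exact hζ.pow_inj hk.1 hl.1
    · have : NeZero n := ⟨hn.ne'⟩
      obtain ⟨k, hk, hcop, rfl⟩ :=
        hζ.isPrimitiveRoot_iff.1 (isPrimitiveRoot_of_mem_primitiveRoots hξ)
      exact ⟨k, Finset.mem_filter.2 ⟨Finset.mem_range.2 hk, hcop.symm⟩, rfl⟩
  have aeval_eq_zero : aeval ζ (∏ k ∈ Finset.range n with n.Coprime k, (1 - X ^ k) -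
      C ((cyclotomic n ℤ).eval 1)) = 0 := by
    simp [eval_one, prod_pow]
  rw [cyclotomic_eq_minpoly hζ hn] at aeval_eq_zero ⊢
  exact minpoly.isIntegrallyClosed_dvd (hζ.isIntegral hn) aeval_eq_zero

lemma aeval_prod_one_sub_X_pow_of_aeval_cyclotomic_eq_zero {S : Type*} [Ring S] {n : ℕ}
    (hn : 0 < n) {c : S} (hc : aeval c (cyclotomic n ℤ) = 0) :
    aeval c (∏ k ∈ Finset.range n with n.Coprime k, (1 - X ^ k : ℤ[X])) =
      ((cyclotomic n ℤ).eval 1 : ℤ) := by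
  obtain ⟨q, hq⟩ := cyclotomic_dvd_prod_one_sub_X_pow_sub_C hn
  rw [sub_eq_iff_eq_add] at hq
  simp [hq, hc]

lemma pow_eq_one_of_aeval_cyclotomic_eq_zero {S : Type*} [Ring S] {n : ℕ} {c : S}
    (hc : aeval c (cyclotomic n ℤ) = 0) : c ^ n = 1 := by
  obtain ⟨q, hq⟩ := cyclotomic.dvd_X_pow_sub_one n ℤ
  simpa [hc, sub_eq_zero] using congrArg (aeval c) hq

variable {R M : Type*} [CommRing R] [AddCommGroup M] [Module R M]

lemma aeval_cyclotomic_eq_zero_of_pow_eq_one {n : ℕ} (hn : 0 < n) {c : Module.End R M}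
    (hpow : c ^ n = 1) (hfix : ∀ d, d ∣ n → d < n → ∀ x, (c ^ d) x = x → x = 0) :
    aeval c (cyclotomic n ℤ) = 0 := by
  have factor_ker : ∀ d ∈ n.properDivisors, ∀ x, aeval c (cyclotomic d ℤ) x = 0 → x = 0 := by
    intro d hd x hx
    obtain ⟨hdn, hlt⟩ := Nat.mem_properDivisors.1 hd
    obtain ⟨q, hq⟩ := cyclotomic.dvd_X_pow_sub_one d ℤ
    rw [mul_comm] at hq
    have h := LinearMap.congr_fun (congrArg (aeval c) hq) x
    exact hfix d hdn hlt x (by simpa [hx, sub_eq_zero] using h)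
  have prod_ker : ∀ x, aeval c (∏ d ∈ n.properDivisors, cyclotomic d ℤ) x = 0 → x = 0 := by
    refine Finset.prod_induction _ (fun P ↦ ∀ x, aeval c P x = 0 → x = 0) ?_ ?_ factor_ker
    · intro P Q hP hQ x hx
      rw [map_mul] at hx
      exact hQ x (hP _ hx)
    · simp
  ext x
  apply prod_ker
  rw [← Module.End.mul_apply, ← map_mul, mul_comm, (eq_cyclotomic_iff hn _).1 rfl]
  simp [hpow]

lemma associated_det_one_sub_pow [IsDomain R] {n k : ℕ} (hn : 1 < n) (hcop : n.Coprime k)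
    {c : Module.End R M} (hpow : c ^ n = 1) :
    Associated (1 - c ^ k).det (1 - c).det := by
  have det_dvd_det_pow (b : Module.End R M) (l : ℕ) : (1 - b).det ∣ (1 - b ^ l).det := by
    rw [← mul_neg_geom_sum, map_mul]
    exact dvd_mul_right _ _
  obtain ⟨l, -, hl⟩ := Nat.exists_mul_mod_eq_one_of_coprime hcop.symm hn
  have pow_pow_eq : (c ^ k) ^ l = c := by
    rw [← pow_mul, pow_eq_pow_mod (k * l) hpow, hl, pow_one]
  refine associated_of_dvd_dvd ?_ (det_dvd_det_pow c k)
  simpa [pow_pow_eq] using det_dvd_det_pow (c ^ k) l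

theorem associated_det_one_sub_pow_totient [IsDomain R] [Module.Free R M] {n : ℕ} (hn : 1 < n)
    {c : Module.End R M} (hc : aeval c (cyclotomic n ℤ) = 0) :
    Associated ((1 - c).det ^ n.totient)
      (((cyclotomic n ℤ).eval 1 : ℤ) ^ Module.finrank R M : R) := by
  let detAeval : ℤ[X] →* R := (LinearMap.det : Module.End R M →* R).comp
    (aeval c : ℤ[X] →ₐ[ℤ] Module.End R M)
  have det_intCast (z : ℤ) : LinearMap.det (z : Module.End R M) = z ^ Module.finrank R M := by
    have : (z : Module.End R M) = (z : R) • 1 := by ext x; simp [Int.cast_smul_eq_zsmul]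
    simp [this]
  have prod_det : ∏ k ∈ Finset.range n with n.Coprime k, (1 - c ^ k).det =
      ((cyclotomic n ℤ).eval 1 : ℤ) ^ Module.finrank R M := by
    rw [← det_intCast, ← aeval_prod_one_sub_X_pow_of_aeval_cyclotomic_eq_zero (by omega) hc]
    exact (Finset.prod_congr rfl fun k _ ↦ by simp [detAeval]).trans (map_prod detAeval _ _).symm
  rw [← prod_det, Nat.totient, ← Finset.prod_const]
  exact Associated.prod _ _ _ fun k hk ↦ (associated_det_one_sub_pow hn
    (Finset.mem_filter.1 hk).2 (pow_eq_one_of_aeval_cyclotomic_eq_zero hc)).symm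

end Cyclotomic

/-! ### Groups and cardinalities -/

lemma natCard_quotient_range {A : Type*} [AddCommGroup A] [Module.Free ℤ A] [Module.Finite ℤ A]
    {f : Module.End ℤ A} (hf : Function.Injective f) :
    Nat.card (A ⧸ f.range) = f.det.natAbs := by
  rw [← Submodule.natAbs_det_equiv f.range (LinearEquiv.ofInjective f hf)]
  rfl

section Group
open Subgroup MulAction

lemma factorization_prod_prime_pow {ι : Type*} [Fintype ι] {p : ι → ℕ} (hp : ∀ i, (p i).Prime)
    (hinj : Function.Injective p) (r : ι → ℕ) (i : ι) :
    (∏ l, p l ^ r l).factorization (p i) = r i := by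
  classical
  rw [Nat.factorization_prod fun l _ ↦ pow_ne_zero _ (hp l).ne_zero, Finsupp.finsetSum_apply]
  simp [(hp _).factorization_pow, Finsupp.single_apply, hinj.eq_iff]

lemma natCard_eq_mul_of_natCard_fiber {α β : Type*} {f : α → β} {k : ℕ} (hk : k ≠ 0)
    (hf : ∀ b, Nat.card {a // f a = b} = k) : Nat.card α = Nat.card β * k := by
  have fiberEquiv (b : β) : {a // f a = b} ≃ Fin k := by
    rw [← hf b]
    exact Nat.equivFinOfCardPos (hf b ▸ hk)
  rw [Nat.card_congr (Equiv.sigmaFiberEquiv f).symm,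
    Nat.card_congr (Equiv.sigmaCongrRight fiberEquiv),
    Nat.card_congr (Equiv.sigmaEquivProd β (Fin k)), Nat.card_prod, Nat.card_fin]

lemma isMulTorsionFree_of_free_additive (A : Type*) [CommGroup A] [Module.Free ℤ (Additive A)] :
    IsMulTorsionFree A := by
  have : IsAddTorsionFree (Additive A) := .of_isTorsionFree ℤ _
  exact ⟨fun _ hn ↦ nsmul_right_injective (M := Additive A) hn⟩

open scoped IsMulCommutative in
lemma free_finite_finrank_of_mulEquiv {A : Type*} [Group A] [IsMulCommutative A] {n : ℕ}
    (ψ : A ≃* Multiplicative (Fin n → ℤ)) :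
    Module.Free ℤ (Additive A) ∧ Module.Finite ℤ (Additive A) ∧
      Module.finrank ℤ (Additive A) = n := by
  let e : Additive A ≃ₗ[ℤ] (Fin n → ℤ) := (MulEquiv.toAdditiveLeft ψ).toIntLinearEquiv
  exact ⟨.of_equiv e.symm, .equiv e.symm, e.finrank_eq.trans (Module.finrank_fin_fun ℤ)⟩

lemma orderOf_pow_of_orderOf_eq_mul {G : Type*} [Monoid G] {g : G} {b n : ℕ}
    (hg : orderOf g = b * n) (hb : b ≠ 0) : orderOf (g ^ b) = n := by
  rw [orderOf_pow_of_dvd hb (hg ▸ dvd_mul_right b n), hg, Nat.mul_div_cancel_left n (by positivity)]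

lemma pow_ne_one_of_orderOf_eq_mul {G : Type*} [Monoid G] {g : G} {b n : ℕ}
    (hg : orderOf g = b * n) (hb : b ≠ 0) (hn : n ≠ 1) : g ^ b ≠ 1 := by
  rwa [← orderOf_eq_one_iff.ne, orderOf_pow_of_orderOf_eq_mul hg hb]

lemma prime_pow_ne_mul_prime_pow {p q l : ℕ} (hp : p.Prime) (hq : q.Prime) (hl : l.Prime)
    (hlp : l ≠ p) (n j : ℕ) : q ^ n ≠ l * p ^ (j + 1) := by
  intro h
  have hlq : l = q := (Nat.prime_dvd_prime_iff_eq hl hq).1 (hl.dvd_of_dvd_pow (Dvd.intro _ h.symm))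
  have hpq : p = q := (Nat.prime_dvd_prime_iff_eq hp hq).1
    (hp.dvd_of_dvd_pow (h ▸ (dvd_pow_self p j.succ_ne_zero).mul_left l))
  exact hlp (hlq.trans hpq.symm)

lemma stabilizer_eq_zpowers_pow_iff {G X : Type*} [Group G] [MulAction G X] {g : G}
    (hg : ∀ y, y ∈ zpowers g) {a : ℕ} (ha : a ∣ orderOf g) (hfin : IsOfFinOrder g) {x : X}
    (hx : g ^ a • x = x) :
    stabilizer G x = zpowers (g ^ a) ↔ ∀ l : ℕ, l.Prime → l ∣ a → g ^ (a / l) • x ≠ x := by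
  have ha0 : a ≠ 0 := ne_zero_of_dvd_ne_zero hfin.orderOf_pos.ne' ha
  constructor
  · intro hstab l hl hla hfix
    obtain ⟨b, rfl⟩ := hla
    rw [Nat.mul_div_cancel_left b hl.pos] at hfix
    rw [mul_ne_zero_iff] at ha0
    have order_dvd : orderOf (g ^ b) ∣ orderOf (g ^ (l * b)) :=
      orderOf_dvd_of_mem_zpowers (hstab ▸ mem_stabilizer_iff.2 hfix)
    obtain ⟨n, hn⟩ := ha
    rw [orderOf_pow_of_orderOf_eq_mul hn (mul_ne_zero_iff.2 ha0),
      orderOf_pow_of_orderOf_eq_mul (n := l * n) (hn.trans (by ring)) ha0.2] at order_dvd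
    have hn0 : 0 < n := Nat.pos_of_mul_pos_left (hn ▸ hfin.orderOf_pos)
    exact (Nat.le_of_dvd hn0 order_dvd).not_gt (lt_mul_left hn0 hl.one_lt)
  · intro hne
    have period_eq : period g x = a := by
      obtain ⟨t, ht⟩ := pow_smul_eq_iff_period_dvd.1 hx
      by_contra! h
      have ht1 : t ≠ 1 := by rintro rfl; exact h (by rw [ht, mul_one])
      have hdvd : t.minFac ∣ a := ht ▸ t.minFac_dvd.mul_left _
      refine hne t.minFac (t.minFac_prime ht1) hdvd (pow_smul_eq_iff_period_dvd.2 ?_)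
      rw [ht, Nat.mul_div_assoc _ t.minFac_dvd]
      exact dvd_mul_right _ _
    refine le_antisymm (fun y hy ↦ ?_) (zpowers_le.2 hx)
    obtain ⟨k, rfl⟩ := mem_zpowers_iff.1 (hg y)
    obtain ⟨t, rfl⟩ := period_eq ▸ zpow_smul_eq_iff_period_dvd.1 hy
    exact mem_zpowers_iff.2 ⟨t, by rw [zpow_mul, zpow_natCast]⟩

lemma orderOf_eq_index_mul_natCard {G : Type*} [Group G] {g : G} (hg : ∀ y, y ∈ zpowers g)
    (C : Subgroup G) : orderOf g = C.index * Nat.card C := by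
  rw [orderOf_eq_card_of_forall_mem_zpowers hg, index_mul_card]

lemma zpowers_pow_index {G : Type*} [Group G] [Finite G] {g : G} (hg : ∀ y, y ∈ zpowers g)
    (C : Subgroup G) : zpowers (g ^ C.index) = C := by
  have : IsCyclic G := ⟨g, hg⟩
  have : C.Normal := inferInstance
  refine eq_of_le_of_card_ge (zpowers_le.2 (C.pow_index_mem g)) ?_
  rw [Nat.card_zpowers,
    orderOf_pow_of_orderOf_eq_mul (orderOf_eq_index_mul_natCard hg C) index_ne_zero_of_finite]

lemma prime_dvd_index_iff {G : Type*} [Group G] [Finite G] {C : Subgroup G} {p j : ℕ}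
    (hp : p.Prime) (hC : Nat.card C = p ^ j) :
    p ∣ C.index ↔ j < (Nat.card G).factorization p := by
  rw [← C.card_mul_index, hC, Nat.factorization_mul (pow_pos hp.pos j).ne' index_ne_zero_of_finite,
    Finsupp.add_apply, hp.factorization_pow, Finsupp.single_eq_same,
    hp.dvd_iff_one_le_factorization index_ne_zero_of_finite]
  lia

end Group

/-! ### Finite subgroups of an extension -/

section Extension
open Subgroup

variable {Γ : Type*} [Group Γ] {L K : Subgroup Γ}

lemma injOn_mk_of_disjoint [L.Normal] (hKL : Disjoint K L) :
    Set.InjOn ((↑) : Γ → Γ ⧸ L) K := fun _ hx _ hy hxy ↦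
  (inv_mul_eq_one.1 <| disjoint_def.1 hKL (K.mul_mem (K.inv_mem hx) hy)
    (QuotientGroup.eq.1 hxy))

lemma finite_of_disjoint [L.Normal] [Finite (Γ ⧸ L)] (hKL : Disjoint K L) : (K : Set Γ).Finite :=
  Set.Finite.of_finite_image (Set.toFinite _) (injOn_mk_of_disjoint hKL)

lemma disjoint_of_finite [IsMulTorsionFree L] (hK : (K : Set Γ).Finite) : Disjoint K L := by
  refine disjoint_def.2 fun {x} hxK hxL ↦ ?_
  have : Finite K := hK
  have finOrder : IsOfFinOrder x :=
    (Submonoid.isOfFinOrder_coe (H := K.toSubmonoid)).2 (isOfFinOrder_of_finite (⟨x, hxK⟩ : K))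
  exact congrArg Subtype.val ((isOfFinOrder_iff_eq_one (⟨x, hxL⟩ : L)).1
    ((Submonoid.isOfFinOrder_coe (H := L.toSubmonoid)).1 finOrder))

lemma eq_zpowers_of_disjoint [L.Normal] (hKL : Disjoint K L) {h : Γ} (hh : h ∈ K)
    (hmap : K.map (QuotientGroup.mk' L) ≤ zpowers (h : Γ ⧸ L)) : K = zpowers h := by
  refine le_antisymm (fun y hy ↦ ?_) (zpowers_le.2 hh)
  obtain ⟨k, hk⟩ := mem_zpowers_iff.1 (hmap (mem_map_of_mem _ hy))
  exact mem_zpowers_iff.2 ⟨k, injOn_mk_of_disjoint hKL (K.zpow_mem hh k) hy hk⟩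

open scoped Pointwise in
lemma subConj_iff_exists_smul {H K : Subgroup Γ} :
    SubConj Γ H K ↔ ∃ γ : Γ, K = MulAut.conj γ • H := Iff.rfl

open scoped Pointwise in
lemma subConj_equivalence (Γ : Type*) [Group Γ] : Equivalence (SubConj Γ) := by
  refine ⟨fun H ↦ ?_, ?_, ?_⟩ <;> simp only [subConj_iff_exists_smul]
  · exact ⟨1, by rw [map_one, one_smul]⟩
  · rintro H _ ⟨γ, rfl⟩
    exact ⟨γ⁻¹, by rw [map_inv, inv_smul_smul]⟩
  · rintro H _ _ ⟨γ, rfl⟩ ⟨δ, rfl⟩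
    exact ⟨δ * γ, by rw [map_mul, mul_smul]⟩

lemma coe_conj_eq [L.Normal] [IsMulCommutative (Γ ⧸ L)] (γ h : Γ) :
    ((γ * h * γ⁻¹ : Γ) : Γ ⧸ L) = h := by
  rw [QuotientGroup.mk_mul, QuotientGroup.mk_mul, mul_comm' (γ : Γ ⧸ L), mul_assoc,
    ← QuotientGroup.mk_mul, mul_inv_cancel, QuotientGroup.mk_one, mul_one]

lemma subConj_zpowers_iff [L.Normal] [IsMulCommutative (Γ ⧸ L)] {h h' : Γ}
    (hmk : (h : Γ ⧸ L) = h') (hdisj : Disjoint (zpowers h') L) :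
    SubConj Γ (zpowers h) (zpowers h') ↔ IsConj h h' := by
  simp only [SubConj, isConj_iff, MonoidHom.map_zpowers, MulEquiv.coe_toMonoidHom,
    MulAut.conj_apply]
  refine exists_congr fun γ ↦ ⟨fun hγ ↦ ?_, fun hγ ↦ by rw [hγ]⟩
  exact injOn_mk_of_disjoint hdisj (hγ ▸ mem_zpowers _) (mem_zpowers h') <|
    (coe_conj_eq γ h).trans hmk

/-- `Γ ⧸ L` acts freely outside the identity on the (abelian) normal subgroup `L`. The condition is
phrased in `Γ`, so that it makes sense without choosing an action. -/
def ActsFreelyOutsideOne (L : Subgroup Γ) : Prop :=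
  ∀ γ ∉ L, ∀ x ∈ L, γ * x * γ⁻¹ = x → x = 1

lemma ActsFreelyOutsideOne.disjoint_centralizer (hfree : ActsFreelyOutsideOne L) {h : Γ}
    (hh : h ∉ L) : Disjoint (centralizer {h}) L :=
  disjoint_def.2 fun {x} hx hxL ↦ hfree h hh x hxL <| by
    rw [mul_inv_eq_iff_eq_mul, mem_centralizer_singleton_iff.1 hx]

lemma zpowers_le_centralizer (h : Γ) : zpowers h ≤ centralizer {h} :=
  zpowers_le.2 (mem_centralizer_singleton_iff.2 rfl)

lemma le_centralizer_of_disjoint [L.Normal] [IsMulCommutative (Γ ⧸ L)] (hKL : Disjoint K L)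
    {h : Γ} (hh : h ∈ K) : K ≤ centralizer {h} := fun y hy ↦
  mem_centralizer_singleton_iff.2 <|
    injOn_mk_of_disjoint hKL (K.mul_mem hy hh) (K.mul_mem hh hy) (mul_comm' (y : Γ ⧸ L) h)

lemma ActsFreelyOutsideOne.isMaxFin_zpowers_iff [L.Normal] [Finite (Γ ⧸ L)]
    [IsMulCommutative (Γ ⧸ L)] [IsMulTorsionFree L] (hfree : ActsFreelyOutsideOne L) {h : Γ}
    (hh : h ∉ L) : IsMaxFin Γ (zpowers h) ↔ centralizer {h} = zpowers h := by
  have centralizer_finite := finite_of_disjoint (hfree.disjoint_centralizer hh)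
  refine ⟨fun hmax ↦ (hmax.2 _ centralizer_finite (zpowers_le_centralizer h)).symm, fun heq ↦
    ⟨heq ▸ centralizer_finite, fun K hK hle ↦ hle.antisymm ?_⟩⟩
  exact heq ▸ le_centralizer_of_disjoint (disjoint_of_finite (L := L) hK) (hle (mem_zpowers h))

/-! ### Relative conjugacy classes -/

variable (L) in
/-- Two elements of `Γ` are `L`-conjugate: they are conjugate by an element of `L`. -/
def relConjSetoid : Setoid Γ where
  r g h := ∃ x ∈ L, x * g * x⁻¹ = h
  iseqv :=
    { refl := fun g ↦ ⟨1, L.one_mem, by simp⟩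
      symm := by
        rintro g _ ⟨x, hx, rfl⟩
        exact ⟨x⁻¹, L.inv_mem hx, by group⟩
      trans := by
        rintro g _ _ ⟨x, hx, rfl⟩ ⟨y, hy, rfl⟩
        exact ⟨y * x, L.mul_mem hy hx, by group⟩ }

variable (L) in
/-- The set of `L`-conjugacy classes of elements of `Γ`. For `L` normal, conjugation by `Γ` induces
an action of `Γ ⧸ L` on it. -/
def RelConjClasses : Type _ := Quotient (relConjSetoid L)

namespace RelConjClasses

variable (L) in
/-- The `L`-conjugacy class of an element. -/
def mk (h : Γ) : RelConjClasses L := Quotient.mk (relConjSetoid L) h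

lemma mk_eq_mk_iff {g h : Γ} : mk L g = mk L h ↔ ∃ x ∈ L, x * g * x⁻¹ = h := Quotient.eq

lemma mk_surjective : Function.Surjective (mk L) := Quotient.mk_surjective

/-- A representative of an `L`-conjugacy class. -/
noncomputable def out (x : RelConjClasses L) : Γ := Quotient.out x

@[simp] lemma mk_out (x : RelConjClasses L) : mk L x.out = x := Quotient.out_eq x

instance : Pow (RelConjClasses L) ℕ where
  pow x e := x.map (· ^ e) <| by
    rintro g _ ⟨x, hx, rfl⟩
    exact ⟨x, hx, conj_pow.symm⟩

variable [L.Normal]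

/-- The image in `Γ ⧸ L` of an `L`-conjugacy class. -/
def proj (x : RelConjClasses L) : Γ ⧸ L :=
  x.lift ((↑) : Γ → Γ ⧸ L) <| by
    rintro g _ ⟨x, hx, rfl⟩
    simp [(QuotientGroup.eq_one_iff x).2 hx]

@[simp] lemma proj_mk (h : Γ) : (mk L h).proj = h := rfl

instance : MulAction (Γ ⧸ L) (RelConjClasses L) where
  smul := Quotient.map₂ (fun γ h ↦ γ * h * γ⁻¹) <| by
    rintro γ δ hγδ h _ ⟨x, hx, rfl⟩
    have hy : γ⁻¹ * δ * x ∈ L := L.mul_mem (QuotientGroup.leftRel_apply.1 hγδ) hx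
    exact ⟨γ * (γ⁻¹ * δ * x) * γ⁻¹, ‹L.Normal›.conj_mem _ hy γ, by group⟩
  one_smul x := by
    obtain ⟨h, rfl⟩ := mk_surjective x
    exact congrArg (mk L) (by group)
  mul_smul := by
    rintro ⟨γ⟩ ⟨δ⟩ ⟨h⟩
    exact congrArg (mk L) (by group)

lemma coe_smul_mk (γ h : Γ) : (γ : Γ ⧸ L) • mk L h = mk L (γ * h * γ⁻¹) := rfl

lemma stabilizer_mk (h : Γ) :
    MulAction.stabilizer (Γ ⧸ L) (mk L h) = (centralizer {h}).map (QuotientGroup.mk' L) := by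
  ext g
  obtain ⟨γ, rfl⟩ := QuotientGroup.mk_surjective g
  simp only [MulAction.mem_stabilizer_iff, coe_smul_mk, mk_eq_mk_iff, mem_map,
    mem_centralizer_singleton_iff, QuotientGroup.mk'_apply]
  constructor
  · rintro ⟨x, hx, hxh⟩
    refine ⟨x * γ, mul_inv_eq_iff_eq_mul.1 ?_, by simp [(QuotientGroup.eq_one_iff x).2 hx]⟩
    exact Eq.trans (by group) hxh
  · rintro ⟨δ, hδ, hδγ⟩
    refine ⟨δ * γ⁻¹, (QuotientGroup.eq_one_iff _).1 (by simp [hδγ]), ?_⟩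
    exact Eq.trans (by group) (mul_inv_eq_iff_eq_mul.2 hδ)

lemma mem_orbit_iff_isConj {h h' : Γ} :
    mk L h' ∈ MulAction.orbit (Γ ⧸ L) (mk L h) ↔ IsConj h h' := by
  rw [isConj_iff, MulAction.mem_orbit_iff, QuotientGroup.mk_surjective.exists]
  simp only [coe_smul_mk, mk_eq_mk_iff]
  constructor
  · rintro ⟨γ, x, -, rfl⟩
    exact ⟨x * γ, by group⟩
  · rintro ⟨γ, rfl⟩
    exact ⟨γ, 1, L.one_mem, by group⟩

variable (L) in
/-- The set of `L`-conjugacy classes of elements of the fibre of `Γ → Γ ⧸ L` over `c`. -/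
def fiber (c : Γ ⧸ L) : Set (RelConjClasses L) := {x | x.proj = c}

lemma smul_eq_self_of_mem_fiber {c : Γ ⧸ L} {x : RelConjClasses L} (hx : x ∈ fiber L c) :
    c • x = x := by
  obtain ⟨h, rfl⟩ := mk_surjective x
  obtain rfl : (h : Γ ⧸ L) = c := hx
  rw [coe_smul_mk, mul_inv_cancel_right]

lemma smul_mem_fiber [IsMulCommutative (Γ ⧸ L)] {c : Γ ⧸ L} {x : RelConjClasses L}
    (hx : x ∈ fiber L c) (g : Γ ⧸ L) : g • x ∈ fiber L c := by
  obtain ⟨h, rfl⟩ := mk_surjective x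
  obtain ⟨γ, rfl⟩ := QuotientGroup.mk_surjective g
  obtain rfl : (h : Γ ⧸ L) = c := hx
  exact coe_conj_eq γ h

lemma bijOn_pow (hfree : ActsFreelyOutsideOne L) {d : Γ ⧸ L} {e : ℕ} (hde : d ^ e ≠ 1) :
    Set.BijOn (· ^ e) (fiber L d) {x ∈ fiber L (d ^ e) | d • x = x} := by
  have notMem {u : Γ} (hu : (u : Γ ⧸ L) = d ^ e) : u ∉ L := fun h ↦
    hde (hu ▸ (QuotientGroup.eq_one_iff u).2 h)
  have injOn_centralizer {u : Γ} (hu : (u : Γ ⧸ L) = d ^ e) :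
      Set.InjOn ((↑) : Γ → Γ ⧸ L) (centralizer {u}) :=
    injOn_mk_of_disjoint (hfree.disjoint_centralizer (notMem hu))
  refine ⟨?_, ?_, ?_⟩
  · rintro ⟨h⟩ (rfl : (h : Γ ⧸ L) = d)
    refine ⟨rfl, ?_⟩
    change mk L (h * h ^ e * h⁻¹) = mk L (h ^ e)
    rw [(Commute.self_pow h e).eq, mul_inv_cancel_right]
  · rintro ⟨h⟩ (rfl : (h : Γ ⧸ L) = d) ⟨h'⟩ (hh' : (h' : Γ ⧸ L) = h) hpow
    obtain ⟨x, hx, hxh⟩ := mk_eq_mk_iff.1 hpow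
    replace hxh : (x * h * x⁻¹) ^ e = h' ^ e := conj_pow.trans hxh
    refine mk_eq_mk_iff.2 ⟨x, hx, injOn_centralizer (u := h' ^ e) ?_ ?_ ?_ ?_⟩
    · simp [hh']
    · exact mem_centralizer_singleton_iff.2 (hxh ▸ Commute.self_pow _ e)
    · exact mem_centralizer_singleton_iff.2 (Commute.self_pow h' e)
    · simp [(QuotientGroup.eq_one_iff x).2 hx, hh']
  · rintro ⟨u⟩ ⟨(hu : (u : Γ ⧸ L) = d ^ e), hfix⟩
    have hd : d ∈ MulAction.stabilizer (Γ ⧸ L) (mk L u) := hfix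
    rw [stabilizer_mk] at hd
    obtain ⟨h, hcomm, rfl⟩ := hd
    refine ⟨mk L h, rfl, congrArg (mk L) ?_⟩
    exact injOn_centralizer hu (pow_mem hcomm e) (mem_centralizer_singleton_iff.2 rfl) hu.symm

end RelConjClasses

section ConjRep
open Polynomial
open scoped IsMulCommutative

variable [L.Normal] [IsMulCommutative L]

variable (L) in
/-- The conjugation action of `Γ` on its abelian normal subgroup `L`, written additively. -/
def conjRep : Representation ℤ Γ (Additive L) :=
  (Representation.ofMulDistribMulAction (ConjAct Γ) L).comp ConjAct.toConjAct.toMonoidHom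

lemma coe_conjRep_apply (γ : Γ) (x : Additive L) :
    ((conjRep L γ x).toMul : Γ) = γ * x.toMul * γ⁻¹ := rfl

lemma conjRep_eq_one_of_mem {γ : Γ} (hγ : γ ∈ L) : conjRep L γ = 1 := by
  ext x : 1
  refine Additive.toMul.injective (Subtype.ext ?_)
  rw [coe_conjRep_apply, mul_inv_eq_iff_eq_mul]
  exact congrArg Subtype.val (mul_comm (⟨γ, hγ⟩ : L) x.toMul)

lemma ActsFreelyOutsideOne.eq_zero_of_conjRep_eq_self (hfree : ActsFreelyOutsideOne L) {γ : Γ}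
    (hγ : γ ∉ L) {x : Additive L} (hx : conjRep L γ x = x) : x = 0 :=
  Additive.toMul.injective <| Subtype.ext <| hfree γ hγ _ x.toMul.2 <|
    (coe_conjRep_apply γ x).symm.trans (congrArg (fun y ↦ (y.toMul : Γ)) hx)

lemma ActsFreelyOutsideOne.injective_one_sub_conjRep (hfree : ActsFreelyOutsideOne L) {γ : Γ}
    (hγ : γ ∉ L) : Function.Injective (1 - conjRep L γ : Module.End ℤ (Additive L)) :=
  (injective_iff_map_eq_zero _).2 fun _ hx ↦
    hfree.eq_zero_of_conjRep_eq_self hγ (sub_eq_zero.1 hx).symm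

lemma ActsFreelyOutsideOne.aeval_conjRep_cyclotomic (hfree : ActsFreelyOutsideOne L) {γ : Γ}
    (hγ : IsOfFinOrder (γ : Γ ⧸ L)) :
    aeval (conjRep L γ) (cyclotomic (orderOf (γ : Γ ⧸ L)) ℤ) = 0 := by
  refine aeval_cyclotomic_eq_zero_of_pow_eq_one hγ.orderOf_pos ?_ fun d hd hlt x hx ↦ ?_
  · rw [← map_pow]
    refine conjRep_eq_one_of_mem ((QuotientGroup.eq_one_iff _).1 ?_)
    rw [QuotientGroup.mk_pow, pow_orderOf_eq_one]
  · have hd0 : d ≠ 0 := ne_zero_of_dvd_ne_zero hγ.orderOf_pos.ne' hd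
    have pow_notMem : γ ^ d ∉ L := fun h ↦
      pow_ne_one_of_lt_orderOf hd0 hlt ((QuotientGroup.eq_one_iff _).2 h)
    exact hfree.eq_zero_of_conjRep_eq_self pow_notMem (by rwa [map_pow])

namespace RelConjClasses

lemma mk_mul_eq_mk_mul_iff (h : Γ) (x y : Additive L) :
    mk L (x.toMul * h) = mk L (y.toMul * h) ↔ x - y ∈ (1 - conjRep L h).range := by
  rw [← neg_mem_iff, neg_sub, mk_eq_mk_iff, LinearMap.mem_range]
  have conj_eq_iff (z : Additive L) :
      (z.toMul : Γ) * (x.toMul * h) * (z.toMul : Γ)⁻¹ = y.toMul * h ↔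
        (1 - conjRep L h) z = y - x := by
    rw [LinearMap.sub_apply, Module.End.one_apply, sub_eq_sub_iff_add_eq_add,
      ← Additive.toMul.injective.eq_iff, ← Subtype.val_inj, toMul_add, toMul_add,
      Subgroup.coe_mul, Subgroup.coe_mul, coe_conjRep_apply, ← mul_assoc (y.toMul : Γ),
      eq_mul_inv_iff_mul_eq, mul_inv_eq_iff_eq_mul, mul_assoc, mul_assoc]
  exact ⟨fun ⟨z, hz, h⟩ ↦ ⟨.ofMul ⟨z, hz⟩, (conj_eq_iff _).1 h⟩,
    fun ⟨z, h⟩ ↦ ⟨z.toMul, z.toMul.2, (conj_eq_iff z).2 h⟩⟩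

lemma natCard_fiber (h : Γ) :
    Nat.card (fiber L (h : Γ ⧸ L)) = Nat.card (Additive L ⧸ (1 - conjRep L h).range) := by
  let translate (x : Additive L) : fiber L (h : Γ ⧸ L) :=
    ⟨mk L (x.toMul * h), by simp [fiber, (QuotientGroup.eq_one_iff _).2 x.toMul.2]⟩
  have translate_surjective : Function.Surjective translate := by
    rintro ⟨⟨g⟩, hg : (g : Γ ⧸ L) = h⟩
    have hmem : g * h⁻¹ ∈ L := (QuotientGroup.eq_one_iff _).1 (by simp [hg])
    exact ⟨.ofMul ⟨g * h⁻¹, hmem⟩, Subtype.ext (congrArg (mk L) (inv_mul_cancel_right g h))⟩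
  refine Nat.card_congr ((Quotient.congrRight (r' := Setoid.ker translate) fun x y ↦ ?_).trans
    (Setoid.quotientKerEquivOfSurjective _ translate_surjective)).symm
  rw [Submodule.quotientRel_def, Setoid.ker_def, Subtype.ext_iff, mk_mul_eq_mk_mul_iff]

variable [Module.Free ℤ (Additive L)] [Module.Finite ℤ (Additive L)]

theorem ncard_fiber_pow_totient (hfree : ActsFreelyOutsideOne L) {c : Γ ⧸ L} (hc : c ≠ 1)
    (hfin : IsOfFinOrder c) :
    (fiber L c).ncard ^ (orderOf c).totient =
      ((cyclotomic (orderOf c) ℤ).eval 1).natAbs ^ Module.finrank ℤ (Additive L) := by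
  obtain ⟨h, rfl⟩ := QuotientGroup.mk_surjective c
  have hh : h ∉ L := fun h' ↦ hc ((QuotientGroup.eq_one_iff h).2 h')
  have one_lt_orderOf : 1 < orderOf (h : Γ ⧸ L) := by
    have := hfin.orderOf_pos
    have := mt orderOf_eq_one_iff.1 hc
    lia
  rw [← Nat.card_coe_set_eq, natCard_fiber,
    natCard_quotient_range (hfree.injective_one_sub_conjRep hh), ← Int.natAbs_pow,
    ← Int.natAbs_pow]
  exact Int.natAbs_eq_iff_associated.2
    (associated_det_one_sub_pow_totient one_lt_orderOf (hfree.aeval_conjRep_cyclotomic hfin))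

lemma finite_fiber (hfree : ActsFreelyOutsideOne L) {c : Γ ⧸ L} (hc : c ≠ 1)
    (hfin : IsOfFinOrder c) : (fiber L c).Finite := by
  have eval_ne_zero : ((cyclotomic (orderOf c) ℤ).eval 1).natAbs ≠ 0 := by
    have : NeZero ((orderOf c : ℕ) : ℤ) := ⟨mod_cast hfin.orderOf_pos.ne'⟩
    rw [Int.natAbs_ne_zero, Ne, ← IsRoot.def, isRoot_cyclotomic_iff]
    exact fun h ↦ hc (orderOf_eq_one_iff.1 (h.eq_orderOf.trans orderOf_one))
  refine Set.finite_of_ncard_ne_zero fun h ↦ ?_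
  have hpow := ncard_fiber_pow_totient hfree hc hfin
  rw [h, zero_pow (Nat.totient_pos.2 hfin.orderOf_pos).ne'] at hpow
  exact pow_ne_zero _ eval_ne_zero hpow.symm

theorem ncard_fiber_of_orderOf_eq_prime_pow (hfree : ActsFreelyOutsideOne L) {c : Γ ⧸ L} {p j k : ℕ}
    (hp : p.Prime) (hc : orderOf c = p ^ (j + 1))
    (hrank : Module.finrank ℤ (Additive L) = (p - 1) * p ^ j * k) :
    (fiber L c).ncard = p ^ k := by
  have : Fact p.Prime := ⟨hp⟩
  have hc1 : c ≠ 1 := by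
    rintro rfl
    exact (Nat.one_lt_pow j.succ_ne_zero hp.one_lt).ne (orderOf_one.symm.trans hc)
  have hfin : IsOfFinOrder c := orderOf_pos_iff.1 (hc ▸ pow_pos hp.pos _)
  have h := ncard_fiber_pow_totient hfree hc1 hfin
  rw [hc, eval_one_cyclotomic_prime_pow, Int.natAbs_natCast, hrank, mul_comm ((p - 1) * p ^ j),
    pow_mul, mul_comm (p - 1), ← Nat.totient_prime_pow_succ hp] at h
  exact Nat.pow_left_injective (Nat.totient_pos.2 (pow_pos hp.pos _)).ne' h

theorem ncard_fiber_of_orderOf_ne_prime_pow (hfree : ActsFreelyOutsideOne L) {c : Γ ⧸ L}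
    (hfin : IsOfFinOrder c) (hc : ∀ p : ℕ, p.Prime → ∀ j : ℕ, p ^ j ≠ orderOf c) :
    (fiber L c).ncard = 1 := by
  have hc1 : c ≠ 1 := by
    rintro rfl
    exact hc 2 Nat.prime_two 0 (by simp)
  have h := ncard_fiber_pow_totient hfree hc1 hfin
  rw [eval_one_cyclotomic_not_prime_pow (hc _), Int.natAbs_one, one_pow] at h
  exact (pow_eq_one_iff_left (Nat.totient_pos.2 hfin.orderOf_pos).ne').1 h

end RelConjClasses

end ConjRep

/-! ### Maximal finite subgroups -/

section MaxFin
open RelConjClasses MulAction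

variable [L.Normal]

variable (L) in
/-- The `L`-conjugacy classes over `c` whose stabilizer is `⟨c⟩`, the smallest possible one. For
`c ≠ 1` these are the classes of the generators of maximal finite subgroups. -/
def maxFiber (c : Γ ⧸ L) : Set (RelConjClasses L) :=
  {x ∈ fiber L c | stabilizer (Γ ⧸ L) x = zpowers c}

lemma smul_mem_maxFiber [IsMulCommutative (Γ ⧸ L)] {c : Γ ⧸ L} {x : RelConjClasses L}
    (hx : x ∈ maxFiber L c) (g : Γ ⧸ L) : g • x ∈ maxFiber L c := by
  refine ⟨smul_mem_fiber hx.1 g, hx.2 ▸ ext fun k ↦ ?_⟩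
  rw [mem_stabilizer_iff, mem_stabilizer_iff, smul_smul, mul_comm', mul_smul, smul_left_cancel_iff]

lemma exists_zpowers_eq_of_isMaxFin [IsMulTorsionFree L] {c : Γ ⧸ L} {H : Subgroup Γ}
    (hH : H.map (QuotientGroup.mk' L) = zpowers c) (hmax : IsMaxFin Γ H) :
    ∃ h : Γ, (h : Γ ⧸ L) = c ∧ zpowers h = H := by
  obtain ⟨h, hhH, rfl⟩ : c ∈ H.map (QuotientGroup.mk' L) := hH ▸ mem_zpowers c
  exact ⟨h, rfl, (eq_zpowers_of_disjoint (disjoint_of_finite hmax.1) hhH hH.le).symm⟩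

variable [Finite (Γ ⧸ L)] [IsMulCommutative (Γ ⧸ L)] [IsMulTorsionFree L]

lemma mk_mem_maxFiber_iff (hfree : ActsFreelyOutsideOne L) {c : Γ ⧸ L} (hc : c ≠ 1) {h : Γ} :
    mk L h ∈ maxFiber L c ↔ (h : Γ ⧸ L) = c ∧ IsMaxFin Γ (zpowers h) := by
  refine and_congr_right fun hhc ↦ ?_
  obtain rfl : (h : Γ ⧸ L) = c := hhc
  have hh : h ∉ L := fun h' ↦ hc ((QuotientGroup.eq_one_iff h).2 h')
  rw [hfree.isMaxFin_zpowers_iff hh, stabilizer_mk]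
  refine ⟨fun heq ↦ ?_, fun heq ↦ by rw [heq, MonoidHom.map_zpowers]; rfl⟩
  exact eq_zpowers_of_disjoint (hfree.disjoint_centralizer hh)
    (mem_centralizer_singleton_iff.2 rfl) heq.le

lemma isMaxFin_zpowers_out (hfree : ActsFreelyOutsideOne L) {c : Γ ⧸ L} (hc : c ≠ 1)
    (x : maxFiber L c) :
    (x.1.out : Γ ⧸ L) = c ∧ IsMaxFin Γ (zpowers x.1.out) := by
  rw [← mk_mem_maxFiber_iff hfree hc, mk_out]
  exact x.2

/-- The conjugacy class of the maximal finite subgroup generated by a representative of `x`. -/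
noncomputable def maxFinClass (hfree : ActsFreelyOutsideOne L) {c : Γ ⧸ L} (hc : c ≠ 1)
    (x : maxFiber L c) : MaxFinClassesOver Γ L (zpowers c) :=
  Quot.mk _ ⟨zpowers x.1.out, by
    rw [MonoidHom.map_zpowers, QuotientGroup.mk'_apply, (isMaxFin_zpowers_out hfree hc x).1],
    (isMaxFin_zpowers_out hfree hc x).2⟩

lemma maxFinClass_eq_iff (hfree : ActsFreelyOutsideOne L) {c : Γ ⧸ L} (hc : c ≠ 1)
    {x y : maxFiber L c} :
    maxFinClass hfree hc x = maxFinClass hfree hc y ↔ x.1 ∈ orbit (Γ ⧸ L) y.1 := by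
  have hx := isMaxFin_zpowers_out hfree hc x
  have hy := isMaxFin_zpowers_out hfree hc y
  refine (((subConj_equivalence Γ).comap Subtype.val).quot_mk_eq_iff _ _).trans ?_
  change SubConj Γ (zpowers x.1.out) (zpowers y.1.out) ↔ _
  rw [subConj_zpowers_iff (hx.1.trans hy.1.symm) (disjoint_of_finite (L := L) hy.2.1), isConj_comm,
    ← mem_orbit_iff_isConj (L := L), mk_out, mk_out]

lemma maxFinClass_surjective (hfree : ActsFreelyOutsideOne L) {c : Γ ⧸ L}
    (hc : c ≠ 1) : Function.Surjective (maxFinClass hfree hc) := by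
  rintro ⟨H, hH, hmax⟩
  obtain ⟨h, hhc, rfl⟩ := exists_zpowers_eq_of_isMaxFin hH hmax
  let x : maxFiber L c := ⟨mk L h, (mk_mem_maxFiber_iff hfree hc).2 ⟨hhc, hmax⟩⟩
  have hx := isMaxFin_zpowers_out hfree hc x
  refine ⟨x, Quot.sound ?_⟩
  change SubConj Γ (zpowers x.1.out) (zpowers h)
  rw [subConj_zpowers_iff (hx.1.trans hhc.symm) (disjoint_of_finite (L := L) hmax.1), isConj_comm,
    ← mem_orbit_iff_isConj (L := L), mk_out]
  exact mem_orbit_self _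

theorem natCard_maxFinClassesOver_mul_index (hfree : ActsFreelyOutsideOne L) {c : Γ ⧸ L}
    (hc : c ≠ 1) :
    Nat.card (MaxFinClassesOver Γ L (zpowers c)) * (zpowers c).index = (maxFiber L c).ncard := by
  rw [← Nat.card_coe_set_eq]
  refine (natCard_eq_mul_of_natCard_fiber (f := maxFinClass hfree hc)
    index_ne_zero_of_finite fun b ↦ ?_).symm
  obtain ⟨y, rfl⟩ := maxFinClass_surjective hfree hc b
  have orbit_subset {x : RelConjClasses L} (hx : x ∈ orbit (Γ ⧸ L) y.1) : x ∈ maxFiber L c := by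
    obtain ⟨g, rfl⟩ := hx
    exact smul_mem_maxFiber y.2 g
  simp only [maxFinClass_eq_iff]
  rw [Nat.card_congr (Equiv.subtypeSubtypeEquivSubtype orbit_subset), ← y.2.2, index_stabilizer]
  rfl

end MaxFin

section Count
open RelConjClasses
open scoped IsMulCommutative

variable [L.Normal] [Finite (Γ ⧸ L)] [IsMulCommutative (Γ ⧸ L)] [IsMulCommutative L]
  [Module.Free ℤ (Additive L)] [Module.Finite ℤ (Additive L)]

lemma finite_maxFinClassesOver_zpowers (hfree : ActsFreelyOutsideOne L) {c : Γ ⧸ L} (hc : c ≠ 1) :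
    Finite (MaxFinClassesOver Γ L (zpowers c)) := by
  have := isMulTorsionFree_of_free_additive L
  have : Finite (maxFiber L c) :=
    (finite_fiber hfree hc (isOfFinOrder_of_finite c)).subset fun _ hx ↦ hx.1
  exact Finite.of_surjective _ (maxFinClass_surjective hfree hc)

lemma smul_eq_self_of_pow_smul_eq_self (hfree : ActsFreelyOutsideOne L) {d : Γ ⧸ L} {e : ℕ}
    (hd : ∀ p : ℕ, p.Prime → ∀ j : ℕ, p ^ j ≠ orderOf d) (hde : d ^ e ≠ 1) {x : RelConjClasses L}
    (hx : x ∈ fiber L (d ^ e)) (hdx : d • x = x) (g : Γ ⧸ L) : g • x = x := by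
  have fixed_eq : {y ∈ fiber L (d ^ e) | d • y = y}.ncard = 1 := by
    rw [← ncard_fiber_of_orderOf_ne_prime_pow hfree (isOfFinOrder_of_finite d) hd]
    exact (bijOn_pow hfree hde).ncard_eq.symm
  have fixed_finite := Set.finite_of_ncard_ne_zero (fixed_eq ▸ one_ne_zero)
  refine (Set.ncard_le_one fixed_finite).1 fixed_eq.le _ ⟨smul_mem_fiber hx g, ?_⟩ _ ⟨hx, hdx⟩
  rw [smul_smul, mul_comm', mul_smul, hdx]

lemma maxFiber_eq_diff (hfree : ActsFreelyOutsideOne L) {g : Γ ⧸ L} (hg : ∀ y, y ∈ zpowers g)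
    {a p j q : ℕ} (horder : orderOf g = a * p ^ (j + 1)) (hp : p.Prime) (hq : q.Prime) (hqa : q ∣ a)
    (hqp : p ∣ a → q = p) :
    maxFiber L (g ^ a) = fiber L (g ^ a) \ {x ∈ fiber L (g ^ a) | g ^ (a / q) • x = x} := by
  have hfin := isOfFinOrder_of_finite g
  have ha0 : a ≠ 0 := left_ne_zero_of_mul (horder ▸ hfin.orderOf_pos.ne')
  have hga : g ^ a ≠ 1 :=
    pow_ne_one_of_orderOf_eq_mul horder ha0 (Nat.one_lt_pow j.succ_ne_zero hp.one_lt).ne'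
  ext x
  simp only [maxFiber, Set.mem_sdiff, Set.mem_ofPred_eq, not_and]
  refine and_congr_right fun hx ↦ ?_
  rw [stabilizer_eq_zpowers_pow_iff hg (horder ▸ dvd_mul_right _ _) hfin
    (smul_eq_self_of_mem_fiber hx)]
  refine ⟨fun h _ ↦ h q hq hqa, fun h l hl hla hfix ↦ h hx ?_⟩
  obtain rfl | hlp := eq_or_ne l p
  · rwa [hqp hla]
  obtain ⟨b, rfl⟩ := hla
  rw [Nat.mul_div_cancel_left b hl.pos] at hfix
  have orderOf_pow_b : orderOf (g ^ b) = l * p ^ (j + 1) :=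
    orderOf_pow_of_orderOf_eq_mul (horder.trans (by ring)) (right_ne_zero_of_mul ha0)
  rw [mul_comm l, pow_mul] at hx hga
  exact smul_eq_self_of_pow_smul_eq_self hfree (fun q hq n ↦ orderOf_pow_b ▸
    prime_pow_ne_mul_prime_pow hp hq hl hlp n j) hga hx hfix _

theorem ncard_maxFiber (hfree : ActsFreelyOutsideOne L) {g : Γ ⧸ L} (hg : ∀ y, y ∈ zpowers g)
    {a p j q : ℕ} (horder : orderOf g = a * p ^ (j + 1)) (hp : p.Prime) (hq : q.Prime) (hqa : q ∣ a)
    (hqp : p ∣ a → q = p) :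
    (maxFiber L (g ^ a)).ncard = (fiber L (g ^ a)).ncard - (fiber L (g ^ (a / q))).ncard := by
  have ha0 : a ≠ 0 := left_ne_zero_of_mul (horder ▸ (isOfFinOrder_of_finite g).orderOf_pos.ne')
  have hga : g ^ a ≠ 1 :=
    pow_ne_one_of_orderOf_eq_mul horder ha0 (Nat.one_lt_pow j.succ_ne_zero hp.one_lt).ne'
  have pow_pow_eq : (g ^ (a / q)) ^ q = g ^ a := by rw [← pow_mul, Nat.div_mul_cancel hqa]
  have ncard_fixed := (bijOn_pow hfree (pow_pow_eq ▸ hga)).ncard_eq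
  rw [pow_pow_eq] at ncard_fixed
  have fiber_finite := finite_fiber hfree hga (isOfFinOrder_of_finite _)
  rw [maxFiber_eq_diff hfree hg horder hp hq hqa hqp, ncard_fixed,
    Set.ncard_sdiff (Set.sep_subset _ _) (fiber_finite.subset (Set.sep_subset _ _))]

end Count

section CyclicQuotient
open RelConjClasses
open scoped IsMulCommutative

variable [L.Normal] [Finite (Γ ⧸ L)] [IsCyclic (Γ ⧸ L)] [IsMulCommutative L]
  [Module.Free ℤ (Additive L)] [Module.Finite ℤ (Additive L)] {C : Subgroup (Γ ⧸ L)}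

theorem finite_maxFinClassesOver (hfree : ActsFreelyOutsideOne L) (hC : C ≠ ⊥) :
    Finite (MaxFinClassesOver Γ L C) := by
  obtain ⟨g, hg⟩ := IsCyclic.exists_generator (α := Γ ⧸ L)
  rw [← zpowers_pow_index hg C] at hC ⊢
  exact finite_maxFinClassesOver_zpowers hfree (zpowers_ne_bot.1 hC)

lemma natCard_maxFinClassesOver_mul_index_eq_sub (hfree : ActsFreelyOutsideOne L) {g : Γ ⧸ L}
    (hg : ∀ y, y ∈ zpowers g) {p j q : ℕ} (hp : p.Prime) (hC : Nat.card C = p ^ (j + 1))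
    (hq : q.Prime) (hqC : q ∣ C.index) (hqp : p ∣ C.index → q = p) :
    Nat.card (MaxFinClassesOver Γ L C) * C.index =
      (fiber L (g ^ C.index)).ncard - (fiber L (g ^ (C.index / q))).ncard := by
  have := isMulTorsionFree_of_free_additive L
  have horder : orderOf g = C.index * p ^ (j + 1) := hC ▸ orderOf_eq_index_mul_natCard hg C
  have hgC : g ^ C.index ≠ 1 := pow_ne_one_of_orderOf_eq_mul horder index_ne_zero_of_finite
    (Nat.one_lt_pow j.succ_ne_zero hp.one_lt).ne'
  have h := natCard_maxFinClassesOver_mul_index hfree hgC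
  rwa [ncard_maxFiber hfree hg horder hp hq hqC hqp, zpowers_pow_index hg] at h

theorem natCard_maxFinClassesOver_mul_index_of_not_dvd (hfree : ActsFreelyOutsideOne L)
    {p j k : ℕ} (hp : p.Prime) (hC : Nat.card C = p ^ (j + 1)) (hCne : C ≠ ⊤) (hpC : ¬ p ∣ C.index)
    (hrank : Module.finrank ℤ (Additive L) = (p - 1) * p ^ j * k) :
    Nat.card (MaxFinClassesOver Γ L C) * C.index = p ^ k - 1 := by
  obtain ⟨g, hg⟩ := IsCyclic.exists_generator (α := Γ ⧸ L)
  obtain ⟨q, hq, b, hb⟩ := Nat.exists_prime_and_dvd (mt index_eq_one.1 hCne)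
  have horder : orderOf g = C.index * p ^ (j + 1) := hC ▸ orderOf_eq_index_mul_natCard hg C
  have hC0 : q * b ≠ 0 := hb ▸ index_ne_zero_of_finite
  have orderOf_pow_b : orderOf (g ^ b) = q * p ^ (j + 1) :=
    orderOf_pow_of_orderOf_eq_mul (horder.trans (by rw [hb]; ring)) (right_ne_zero_of_mul hC0)
  have hqp : q ≠ p := by
    rintro rfl
    exact hpC (Dvd.intro b hb.symm)
  have ncard_fiber_b : (fiber L (g ^ b)).ncard = 1 :=
    ncard_fiber_of_orderOf_ne_prime_pow hfree (isOfFinOrder_of_finite _) fun l hl n ↦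
      orderOf_pow_b ▸ prime_pow_ne_mul_prime_pow hp hl hq hqp n j
  rw [natCard_maxFinClassesOver_mul_index_eq_sub hfree hg hp hC hq (Dvd.intro b hb.symm)
      fun h ↦ absurd h hpC, ncard_fiber_of_orderOf_eq_prime_pow hfree hp
      (orderOf_pow_of_orderOf_eq_mul horder index_ne_zero_of_finite) hrank]
  rw [hb, Nat.mul_div_cancel_left b hq.pos, ncard_fiber_b]

theorem natCard_maxFinClassesOver_mul_index_of_dvd (hfree : ActsFreelyOutsideOne L)
    {p j k : ℕ} (hp : p.Prime) (hC : Nat.card C = p ^ (j + 1)) (hpC : p ∣ C.index)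
    (hrank : Module.finrank ℤ (Additive L) = (p - 1) * p ^ (j + 1) * k) :
    Nat.card (MaxFinClassesOver Γ L C) * C.index = p ^ (k * p) - p ^ k := by
  obtain ⟨g, hg⟩ := IsCyclic.exists_generator (α := Γ ⧸ L)
  have horder : orderOf g = C.index * p ^ (j + 1) := hC ▸ orderOf_eq_index_mul_natCard hg C
  have orderOf_pow_div : orderOf (g ^ (C.index / p)) = p ^ (j + 1 + 1) :=
    orderOf_pow_of_orderOf_eq_mul
      (by rw [horder, pow_succ' p (j + 1), ← mul_assoc, Nat.div_mul_cancel hpC])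
      ((Nat.div_ne_zero_iff_of_dvd hpC).2 ⟨index_ne_zero_of_finite, hp.ne_zero⟩)
  rw [natCard_maxFinClassesOver_mul_index_eq_sub hfree hg hp hC hp hpC fun _ ↦ rfl,
    ncard_fiber_of_orderOf_eq_prime_pow hfree hp (k := k * p)
      (orderOf_pow_of_orderOf_eq_mul horder index_ne_zero_of_finite) (hrank.trans (by ring)),
    ncard_fiber_of_orderOf_eq_prime_pow hfree hp orderOf_pow_div hrank]

end CyclicQuotient

end Extension

/-- Write `m = p₁^{r₁} ⋯ p_s^{r_s}` with distinct primes, in the setting of the paper (`L ≅ ℤⁿ`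
normal in `Γ`, `G = Γ/L` cyclic of order `m`, conjugation action free outside the origin).  Let
`C ⊊ G` with `|C| = p_i^j`, `1 ≤ j ≤ r_i`, and let `k[i]` satisfy `n = (p_i−1)·p_i^{r_i−1}·k[i]`.
Then `ℳ(C)` is finite and `m·|ℳ(C)| = (p_i^{k[i]} − 1)·p_i^{r_i}` if `j = r_i`, while
`m·|ℳ(C)| = p_i^{k[i]·p_i^{r_i−j}+j} − p_i^{k[i]·p_i^{r_i−j−1}+j}` if `j ≤ r_i − 1`; in
particular the corresponding fractions with denominator `m` are integers. -/
theorem statement16 (n m : ℕ) (hn : 1 ≤ n) (hm : 1 ≤ m)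
    (Γ : Type*) [Group Γ] (L : Subgroup Γ) [L.Normal]
    (hL : Nonempty (L ≃* Multiplicative (Fin n → ℤ)))
    (hcyc : IsCyclic (Γ ⧸ L)) (hcard : Nat.card (Γ ⧸ L) = m)
    (hfree : ∀ γ : Γ, γ ∉ L → ∀ x : Γ, x ∈ L → x ≠ 1 → γ * x * γ⁻¹ ≠ x)
    (s : ℕ) (p r : Fin s → ℕ) (hp : ∀ i, (p i).Prime) (hpinj : Function.Injective p)
    (hr : ∀ i, 1 ≤ r i) (hmprod : m = ∏ i, p i ^ r i)
    (i : Fin s) (j : ℕ) (hj1 : 1 ≤ j) (hjr : j ≤ r i)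
    (C : Subgroup (Γ ⧸ L)) (hCne : C ≠ ⊤) (hCcard : Nat.card C = p i ^ j)
    (kI : ℕ) (hkI : n = (p i - 1) * p i ^ (r i - 1) * kI) :
    Finite (MaxFinClassesOver Γ L C) ∧
    (j = r i → Nat.card (MaxFinClassesOver Γ L C) * m = (p i ^ kI - 1) * p i ^ r i) ∧
    (j ≤ r i - 1 → Nat.card (MaxFinClassesOver Γ L C) * m =
      p i ^ (kI * p i ^ (r i - j) + j) - p i ^ (kI * p i ^ (r i - j - 1) + j)) := by
  obtain ⟨ψ⟩ := hL
  have : IsMulCommutative L := ⟨⟨fun x y ↦ ψ.injective (by simp [mul_comm])⟩⟩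
  obtain ⟨_, _, hrank⟩ := free_finite_finrank_of_mulEquiv ψ
  subst hcard
  have : Finite (Γ ⧸ L) := Nat.finite_of_card_ne_zero (by lia)
  have hfree' : ActsFreelyOutsideOne L := fun γ hγ x hx h ↦ by_contra fun hx1 ↦
    hfree γ hγ x hx hx1 h
  have dvd_index_iff : p i ∣ C.index ↔ j < r i := by
    rw [prime_dvd_index_iff (hp i) hCcard, hmprod, factorization_prod_prime_pow hp hpinj]
  obtain ⟨j, rfl⟩ := Nat.exists_eq_add_of_le' hj1
  rw [← C.index_mul_card, hCcard, ← mul_assoc]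
  refine ⟨finite_maxFinClassesOver hfree' ?_, fun hj ↦ ?_, fun hj ↦ ?_⟩
  · rw [← Subgroup.one_lt_card_iff_ne_bot, hCcard]
    exact Nat.one_lt_pow j.succ_ne_zero (hp i).one_lt
  · rw [natCard_maxFinClassesOver_mul_index_of_not_dvd hfree' (hp i) hCcard hCne
      (dvd_index_iff.not.2 hj.not_lt) (k := kI)
      (hrank.trans (by rw [hkI, ← hj, Nat.add_sub_cancel])), hj]
  · obtain ⟨d, hd⟩ := Nat.exists_eq_add_of_le (show j + 2 ≤ r i by lia)
    have hrank' : n = (p i - 1) * p i ^ (j + 1) * (kI * p i ^ d) := by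
      rw [hkI, hd, show j + 2 + d - 1 = j + 1 + d by lia]; ring
    rw [natCard_maxFinClassesOver_mul_index_of_dvd hfree' (hp i) hCcard
      (dvd_index_iff.2 (by lia)) (hrank.trans hrank'), Nat.sub_mul, ← pow_add, ← pow_add,
      show r i - (j + 1) = d + 1 by lia, Nat.add_sub_cancel, pow_succ (p i) d, mul_assoc]
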